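/- For every function f in the class S, the image f(𝔻) contains the open disk {w ∈ ℂ : |w| < 1/4}. (Koebe's one-quarter theorem, used repeatedly in the paper.) -/

import Mathlib

/-- The class `S` of normalized univalent functions on the unit disk:
holomorphic and injective on `𝔻 = {z : ℂ | |z| < 1}` with `f 0 = 0` and `f' 0 = 1`. -/
def SClass (f : ℂ → ℂ) : Prop :=
  DifferentiableOn ℂ f (Metric.ball (0:ℂ) 1) ∧ Set.InjOn f (Metric.ball (0:ℂ) 1) ∧
    f 0 = 0 ∧ deriv f 0 = 1

/-- The `n`-th Taylor coefficient of `f` at `0`: `aₙ(f) = f⁽ⁿ⁾(0)/n!`. -/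
noncomputable def taylorCoeff (f : ℂ → ℂ) (n : ℕ) : ℂ :=
  iteratedDeriv n f 0 / n.factorial

/-!
If a univalent `F` with `F 0 = 0` omits the value `1`, then `1 - F` has a holomorphic square root,
and so `F = 4k / (1 + k)²` with `k` univalent, `k 0 = 0` and `F' 0 = 4 k' 0`. The values `w` and
`1 / w` of `k` give the same `F`, so `k(𝔻)` is disjoint from its inversion `1 / k(𝔻)`, and
it suffices to deduce `|k' 0| ≤ 1`.

Measure area in the coordinate `log z`. As `z k' z / k z` has mean value `1` on circles about `0`,
Cauchy–Schwarz shows that `k` does not decrease the area of an annulus `e ^ s < |z| < e ^ t` with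
`t < 0`. Given `σ < log |k' 0|`, for `s` close to `-∞` its image under `k` and the inversion of this
image both lie in the annulus `e ^ (s + σ) < |z| < e ^ (-s - σ)`. Being disjoint, they satisfy
`2 (t - s) ≤ -2 (s + σ)`, so `σ ≤ -t`; now let `t` tend to `0` and `σ` to `log |k' 0|`.
-/

open Complex Filter Metric MeasureTheory Set
open scoped ENNReal Pointwise Real Topology

section Rectangle

variable {S T : Set ℝ}

lemma measurableEquivRealProd_symm_preimage_reProdIm (S T : Set ℝ) :
    measurableEquivRealProd.symm ⁻¹' (S ×ℂ T) = S ×ˢ T := by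
  ext p
  simp [mem_reProdIm]

lemma measurableSet_reProdIm (hS : MeasurableSet S) (hT : MeasurableSet T) :
    MeasurableSet (S ×ℂ T) :=
  (measurable_re hS).inter (measurable_im hT)

lemma volume_reProdIm (S T : Set ℝ) : volume (S ×ℂ T) = volume S * volume T := by
  rw [← volume_preserving_equiv_real_prod.symm.measure_preimage_equiv,
    measurableEquivRealProd_symm_preimage_reProdIm, Measure.volume_eq_prod, Measure.prod_prod]

lemma setIntegral_reProdIm {E : Type*} [NormedAddCommGroup E] [NormedSpace ℝ E] {f : ℂ → E}
    (hf : IntegrableOn f (S ×ℂ T)) :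
    ∫ z in S ×ℂ T, f z = ∫ x in S, ∫ y in T, f (x + y * I) := by
  have hmp := volume_preserving_equiv_real_prod.symm
  have hemb := measurableEquivRealProd.symm.measurableEmbedding
  rw [← hmp.integrableOn_comp_preimage hemb,
    measurableEquivRealProd_symm_preimage_reProdIm, Measure.volume_eq_prod] at hf
  rw [← hmp.setIntegral_preimage_emb hemb, measurableEquivRealProd_symm_preimage_reProdIm,
    Measure.volume_eq_prod, setIntegral_prod (fun p ↦ f (measurableEquivRealProd.symm p)) hf]
  simp [mk_eq_add_mul_I]

end Rectangle

lemma measure_univ_le_lintegral_enorm_sq_of_enorm_average_eq_one {α E : Type*}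
    [MeasurableSpace α] {μ : Measure α} [IsFiniteMeasure μ] [NormedAddCommGroup E]
    [NormedSpace ℝ E] {f : α → E} (hf : ‖⨍ x, f x ∂μ‖ₑ = 1) :
    μ univ ≤ ∫⁻ x, ‖f x‖ₑ ^ 2 ∂μ := by
  have hL1 : μ univ ≤ ∫⁻ x, ‖f x‖ₑ ∂μ := by
    calc μ univ = ‖∫ x, f x ∂μ‖ₑ := by
          rw [← measure_smul_average, enorm_smul, hf, mul_one, measureReal_def,
            Real.enorm_of_nonneg ENNReal.toReal_nonneg, ENNReal.ofReal_toReal (by finiteness)]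
      _ ≤ ∫⁻ x, ‖f x‖ₑ ∂μ := enorm_integral_le_lintegral_enorm f
  have hsq (x : α) : 2 * ‖f x‖ₑ ≤ ‖f x‖ₑ ^ 2 + 1 := by
    rw [enorm_eq_nnnorm]
    exact_mod_cast by simpa using two_mul_le_add_sq ‖f x‖₊ 1
  refine (ENNReal.add_le_add_iff_right (measure_ne_top μ univ)).1 ?_
  calc μ univ + μ univ ≤ 2 * ∫⁻ x, ‖f x‖ₑ ∂μ := by rw [two_mul]; gcongr
    _ = ∫⁻ x, 2 * ‖f x‖ₑ ∂μ := (lintegral_const_mul' _ _ ENNReal.ofNat_ne_top).symm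
    _ ≤ ∫⁻ x, ‖f x‖ₑ ^ 2 + 1 ∂μ := lintegral_mono hsq
    _ = ∫⁻ x, ‖f x‖ₑ ^ 2 ∂μ + μ univ := by rw [lintegral_add_right _ measurable_const]; simp

section LogarithmicCoordinates

/-- The open annulus `e ^ s < |z| < e ^ t` about the origin, parametrized by the logarithms of its
radii. -/
def expAnnulus (s t : ℝ) : Set ℂ :=
  {z | Real.exp s < ‖z‖ ∧ ‖z‖ < Real.exp t}

/-- The rectangle that `Complex.exp` maps bijectively onto `expAnnulus s t`. -/
def logRectangle (s t : ℝ) : Set ℂ :=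
  Ioo s t ×ℂ Ioc (-π) π

variable {s t : ℝ}

lemma ne_zero_of_mem_expAnnulus {z : ℂ} (hz : z ∈ expAnnulus s t) : z ≠ 0 :=
  norm_pos_iff.1 ((Real.exp_pos s).trans hz.1)

lemma isOpen_expAnnulus (s t : ℝ) : IsOpen (expAnnulus s t) :=
  (isOpen_lt continuous_const continuous_norm).inter (isOpen_lt continuous_norm continuous_const)

lemma inv_expAnnulus (s t : ℝ) : (expAnnulus s t)⁻¹ = expAnnulus (-t) (-s) := by
  ext z
  rcases eq_or_ne z 0 with rfl | hz
  · simp [expAnnulus, (Real.exp_pos _).not_gt]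
  · have hz : 0 < ‖z‖ := norm_pos_iff.2 hz
    simp [expAnnulus, Real.exp_neg, lt_inv_comm₀, inv_lt_comm₀, hz, Real.exp_pos, and_comm]

lemma expAnnulus_subset_ball (s t : ℝ) : expAnnulus s t ⊆ ball 0 (Real.exp t) :=
  fun _ hz ↦ mem_ball_zero_iff.2 hz.2

lemma measurableSet_logRectangle (s t : ℝ) : MeasurableSet (logRectangle s t) :=
  measurableSet_reProdIm measurableSet_Ioo measurableSet_Ioc

lemma volume_logRectangle (s t : ℝ) :
    volume (logRectangle s t) = ENNReal.ofReal (2 * π * (t - s)) := by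
  rw [logRectangle, volume_reProdIm, Real.volume_Ioo, Real.volume_Ioc, mul_comm,
    ← ENNReal.ofReal_mul (by linarith [Real.pi_pos])]
  ring_nf

lemma injOn_exp_logRectangle (s t : ℝ) : InjOn exp (logRectangle s t) :=
  fun _ hx _ hy ↦ exp_inj_of_neg_pi_lt_of_le_pi hx.2.1 hx.2.2 hy.2.1 hy.2.2

lemma exp_image_logRectangle (s t : ℝ) : exp '' logRectangle s t = expAnnulus s t := by
  refine Subset.antisymm ?_ fun z hz ↦ ?_
  · rintro _ ⟨ζ, hζ, rfl⟩
    simpa [expAnnulus, norm_exp] using hζ.1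
  · have hz0 := ne_zero_of_mem_expAnnulus hz
    have hre : (log z).re ∈ Ioo s t := by
      rw [log_re]
      exact ⟨(Real.lt_log_iff_exp_lt (norm_pos_iff.2 hz0)).2 hz.1,
        (Real.log_lt_iff_lt_exp (norm_pos_iff.2 hz0)).2 hz.2⟩
    exact ⟨log z, ⟨hre, neg_pi_lt_log_im z, log_im_le_pi z⟩, exp_log hz0⟩

lemma mapsTo_exp_logRectangle (s t : ℝ) : MapsTo exp (logRectangle s t) (expAnnulus s t) :=
  mapsTo_iff_image_subset.2 (exp_image_logRectangle s t).subset

variable {E : Type*} [NormedAddCommGroup E] {q : ℂ → E}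

lemma integrableOn_comp_exp_logRectangle (hq : ContinuousOn q (closedBall 0 (Real.exp t))) :
    IntegrableOn (fun ζ ↦ q (exp ζ)) (logRectangle s t) := by
  have hcompact : IsCompact (Icc s t ×ℂ Icc (-π) π) := isCompact_Icc.reProdIm isCompact_Icc
  refine (ContinuousOn.integrableOn_compact hcompact ?_).mono_set
    (inter_subset_inter (preimage_mono Ioo_subset_Icc_self) (preimage_mono Ioc_subset_Icc_self))
  refine hq.comp continuous_exp.continuousOn fun ζ hζ ↦ ?_
  simpa [norm_exp] using hζ.1.2

variable [NormedSpace ℂ E]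

lemma integral_comp_exp_add_mul_I (q : ℂ → E) (x : ℝ) :
    ∫ y in Ioc (-π) π, q (exp (x + y * I)) = (2 * π) • Real.circleAverage q 0 (Real.exp x) := by
  have hmap (y : ℝ) : exp (x + y * I) = circleMap 0 (Real.exp x) y := by
    simp [circleMap, exp_add]
  rw [Real.circleAverage_eq_integral_add (-π), smul_inv_smul₀ Real.two_pi_pos.ne',
    intervalIntegral.integral_comp_add_right (fun θ ↦ q (circleMap 0 (Real.exp x) θ)),
    intervalIntegral.integral_of_le (by linarith [Real.pi_pos])]
  simp only [hmap, zero_add]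
  ring_nf

lemma average_comp_exp_logRectangle [CompleteSpace E] (hst : s < t)
    (hq : DiffContOnCl ℂ q (ball 0 (Real.exp t))) :
    ⨍ ζ in logRectangle s t, q (exp ζ) = q 0 := by
  have hcont := hq.continuousOn_ball
  have hmean {x : ℝ} (hx : x ∈ Ioo s t) : Real.circleAverage q 0 (Real.exp x) = q 0 := by
    refine DiffContOnCl.circleAverage (hq.mono (ball_subset_ball ?_))
    simpa using hx.2.le
  rw [setAverage_eq, measureReal_def, volume_logRectangle, logRectangle,
    setIntegral_reProdIm (integrableOn_comp_exp_logRectangle hcont)]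
  simp only [integral_comp_exp_add_mul_I]
  rw [setIntegral_congr_fun measurableSet_Ioo fun x hx ↦ congrArg (_ • ·) (hmean hx)]
  have hst' : 0 < t - s := sub_pos.2 hst
  rw [setIntegral_const, measureReal_def, Real.volume_Ioo, ENNReal.toReal_ofReal hst'.le,
    ENNReal.toReal_ofReal (by positivity), smul_smul, smul_smul, mul_assoc, mul_comm (t - s),
    inv_mul_cancel₀ (by positivity), one_smul]

end LogarithmicCoordinates

/-- The measure `|dz|² / |z|²`, that is, planar area in the coordinate `log z`. -/
noncomputable def logArea : Measure ℂ :=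
  volume.withDensity fun z ↦ (‖z‖ₑ ^ 2)⁻¹

section LogArea

variable {s t : ℝ} {S : Set ℂ} {g : ℂ → ℂ}

lemma det_restrictScalars_eq_normSq_det (L : ℂ →L[ℂ] ℂ) :
    (L.restrictScalars ℝ).det = normSq L.det :=
  LinearMap.det_restrictScalars.trans (Algebra.norm_complex_apply _)

lemma logArea_image (hS : MeasurableSet S) (hg : ∀ z ∈ S, DifferentiableAt ℂ g z)
    (hinj : InjOn g S) (hg0 : ∀ z ∈ S, g z ≠ 0) :
    logArea (g '' S) = ∫⁻ z in S, ‖logDeriv g z‖ₑ ^ 2 := by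
  rw [logArea, withDensity_apply', lintegral_image_eq_lintegral_abs_det_fderiv_mul _ hS
    (fun z hz ↦ ((hg z hz).hasDerivAt.hasFDerivAt.restrictScalars ℝ).hasFDerivWithinAt) hinj]
  refine setLIntegral_congr_fun hS fun z hz ↦ ?_
  have hjac : ENNReal.ofReal |normSq (deriv g z)| = ‖deriv g z‖ₑ ^ 2 := by
    rw [normSq_eq_norm_sq, abs_sq, ENNReal.ofReal_pow (norm_nonneg _), ofReal_norm]
  simp only [det_restrictScalars_eq_normSq_det, ContinuousLinearMap.det_toSpanSingleton, hjac]
  rw [logDeriv_apply, div_eq_mul_inv, enorm_mul, enorm_inv (hg0 z hz), mul_pow, ENNReal.inv_pow]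

lemma logArea_inv (hS : MeasurableSet S) (h0 : 0 ∉ S) : logArea S⁻¹ = logArea S := by
  have hS0 : ∀ z ∈ S, z ≠ 0 := fun z hz ↦ ne_of_mem_of_not_mem hz h0
  have hinv := logArea_image hS (fun z hz ↦ differentiableAt_inv (hS0 z hz))
    inv_injective.injOn fun z hz ↦ inv_ne_zero (hS0 z hz)
  have hid := logArea_image hS (fun z _ ↦ differentiableAt_id) (injOn_id S) hS0
  rw [image_inv_eq_inv] at hinv
  rw [image_id] at hid
  rw [hinv, hid]
  simp [neg_div]

lemma logArea_expAnnulus (s t : ℝ) :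
    logArea (expAnnulus s t) = ENNReal.ofReal (2 * π * (t - s)) := by
  rw [← exp_image_logRectangle, logArea_image (measurableSet_logRectangle s t)
    (fun _ _ ↦ differentiableAt_exp) (injOn_exp_logRectangle s t) (fun _ _ ↦ exp_ne_zero _),
    Complex.logDeriv_exp]
  simp [volume_logRectangle]

end LogArea

section Univalent

variable {g : ℂ → ℂ} {r s t : ℝ}

lemma dslope_zero_ne_zero_of_injOn (hinj : InjOn g (ball 0 r)) (hg0 : g 0 = 0)
    (hd : deriv g 0 ≠ 0) {z : ℂ} (hz : z ∈ ball 0 r) : dslope g 0 z ≠ 0 := by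
  rcases eq_or_ne z 0 with rfl | hz0
  · rwa [dslope_same]
  · have h0 : (0 : ℂ) ∈ ball 0 r := mem_ball_self (pos_of_mem_ball hz)
    have hgz : g z ≠ 0 := fun h ↦ hz0 (hinj hz h0 (h.trans hg0.symm))
    simpa [dslope_of_ne _ hz0, slope_def_field, hg0] using ⟨hgz, hz0⟩

lemma differentiableOn_deriv_div_dslope (hg : DifferentiableOn ℂ g (ball 0 r))
    (hinj : InjOn g (ball 0 r)) (hg0 : g 0 = 0) (hd : deriv g 0 ≠ 0) :
    DifferentiableOn ℂ (fun z ↦ deriv g z / dslope g 0 z) (ball 0 r) := by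
  rcases le_or_gt r 0 with hr | hr
  · rw [ball_eq_empty.2 hr]
    exact differentiableOn_empty
  · exact (hg.deriv isOpen_ball).fun_div
      ((Complex.differentiableOn_dslope (ball_mem_nhds 0 hr)).2 hg)
      fun z hz ↦ dslope_zero_ne_zero_of_injOn hinj hg0 hd hz

lemma logDeriv_comp_exp {ζ : ℂ} (hg : DifferentiableAt ℂ g (exp ζ)) (hg0 : g 0 = 0) :
    logDeriv (g ∘ exp) ζ = deriv g (exp ζ) / dslope g 0 (exp ζ) := by
  have hexp := exp_ne_zero ζ
  rw [logDeriv_comp hg differentiableAt_exp, Complex.deriv_exp, logDeriv_apply,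
    dslope_of_ne _ hexp, slope_def_field, hg0, sub_zero, sub_zero, div_mul_eq_mul_div,
    div_div_eq_mul_div]

lemma logArea_image_expAnnulus (hg : ∀ z ∈ expAnnulus s t, DifferentiableAt ℂ g z)
    (hinj : InjOn g (expAnnulus s t)) (hne : ∀ z ∈ expAnnulus s t, g z ≠ 0) :
    logArea (g '' expAnnulus s t) = ∫⁻ ζ in logRectangle s t, ‖logDeriv (g ∘ exp) ζ‖ₑ ^ 2 := by
  have hmaps := mapsTo_exp_logRectangle s t
  rw [← exp_image_logRectangle, ← image_comp]
  exact logArea_image (measurableSet_logRectangle s t)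
    (fun ζ hζ ↦ (hg _ (hmaps hζ)).comp ζ differentiableAt_exp)
    (hinj.comp (injOn_exp_logRectangle s t) hmaps) fun ζ hζ ↦ hne _ (hmaps hζ)

lemma logArea_expAnnulus_le_logArea_image (hg : DifferentiableOn ℂ g (ball 0 r))
    (hinj : InjOn g (ball 0 r)) (hg0 : g 0 = 0) (hd : deriv g 0 ≠ 0) (hst : s < t)
    (htr : Real.exp t < r) :
    logArea (expAnnulus s t) ≤ logArea (g '' expAnnulus s t) := by
  have hsub : expAnnulus s t ⊆ ball 0 r :=
    (expAnnulus_subset_ball s t).trans (ball_subset_ball htr.le)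
  have hdiff (z) (hz : z ∈ expAnnulus s t) : DifferentiableAt ℂ g z :=
    hg.differentiableAt (isOpen_ball.mem_nhds (hsub hz))
  have hne (z) (hz : z ∈ expAnnulus s t) : g z ≠ 0 := fun h ↦
    ne_zero_of_mem_expAnnulus hz
      (hinj (hsub hz) (mem_ball_self (pos_of_mem_ball (hsub hz))) (h.trans hg0.symm))
  have hmean : ⨍ ζ in logRectangle s t, deriv g (exp ζ) / dslope g 0 (exp ζ) = 1 := by
    rw [average_comp_exp_logRectangle (q := fun z ↦ deriv g z / dslope g 0 z) hst
      ((differentiableOn_deriv_div_dslope hg hinj hg0 hd).diffContOnCl_ball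
        (closedBall_subset_ball htr)), dslope_same, div_self hd]
  have : IsFiniteMeasure (volume.restrict (logRectangle s t)) := ⟨by simp [volume_logRectangle]⟩
  calc logArea (expAnnulus s t) = volume.restrict (logRectangle s t) univ := by
        rw [logArea_expAnnulus, Measure.restrict_apply_univ, volume_logRectangle]
    _ ≤ ∫⁻ ζ in logRectangle s t, ‖deriv g (exp ζ) / dslope g 0 (exp ζ)‖ₑ ^ 2 :=
        measure_univ_le_lintegral_enorm_sq_of_enorm_average_eq_one (by simp [hmean])
    _ = ∫⁻ ζ in logRectangle s t, ‖logDeriv (g ∘ exp) ζ‖ₑ ^ 2 :=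
        setLIntegral_congr_fun (measurableSet_logRectangle s t) fun ζ hζ ↦ by
          simp only [logDeriv_comp_exp (hdiff _ (mapsTo_exp_logRectangle s t hζ)) hg0]
    _ = logArea (g '' expAnnulus s t) :=
        (logArea_image_expAnnulus hdiff (hinj.mono hsub) hne).symm

lemma eventually_forall_mul_lt_norm_of_lt_norm {K : Set ℂ} {c : ℝ} (hK : IsCompact K)
    (hg : ∀ z ∈ K, ContinuousAt g z) (hne : ∀ z ∈ K, z ≠ 0 → g z ≠ 0) (hg0 : g 0 = 0)
    (hc : c < ‖deriv g 0‖) (hc0 : 0 < c) :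
    ∀ᶠ a in 𝓝 (0 : ℝ), ∀ z ∈ K, a < ‖z‖ → a * c < ‖g z‖ := by
  refine hK.eventually_forall_of_forall_eventually fun z hz ↦ ?_
  rcases eq_or_ne z 0 with rfl | hz0
  · have hd : DifferentiableAt ℂ g 0 := differentiableAt_of_deriv_ne_zero
      (norm_pos_iff.1 (hc0.trans hc))
    have hcd : ∀ᶠ z in 𝓝 0, c < ‖dslope g 0 z‖ :=
      (continuousAt_dslope_same.2 hd).norm.eventually_const_lt (by simpa using hc)
    filter_upwards [(continuous_snd.tendsto ((0 : ℝ), (0 : ℂ))).eventually hcd]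
      with ⟨a, z⟩ hz' haz
    calc a * c < ‖z‖ * c := by gcongr
      _ ≤ ‖z‖ * ‖dslope g 0 z‖ := by gcongr
      _ = ‖g z‖ := by simpa [hg0] using congrArg norm (sub_smul_dslope g 0 z)
  · have hleft : ContinuousAt (fun p : ℝ × ℂ ↦ p.1 * c) (0, z) := by fun_prop
    have hright : ContinuousAt (fun p : ℝ × ℂ ↦ ‖g p.2‖) (0, z) :=
      ((hg z hz).comp_of_eq continuousAt_snd rfl).norm
    filter_upwards [hleft.eventually_lt hright (by simpa using hne z hz hz0)] with p hp _
    exact hp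

lemma eventually_mapsTo_expAnnulus {σ : ℝ} (hg : DifferentiableOn ℂ g (ball 0 r))
    (hinj : InjOn g (ball 0 r)) (hg0 : g 0 = 0) (hσ : Real.exp σ < ‖deriv g 0‖)
    (htr : Real.exp t < r) (τ : ℝ) :
    ∀ᶠ s in atBot, MapsTo g (expAnnulus s t) (expAnnulus (s + σ) (τ - s)) := by
  have hsub : closedBall (0 : ℂ) (Real.exp t) ⊆ ball 0 r := closedBall_subset_ball htr
  have hcompact : IsCompact (closedBall (0 : ℂ) (Real.exp t)) := isCompact_closedBall _ _
  have hcont (z) (hz : z ∈ closedBall 0 (Real.exp t)) : ContinuousAt g z :=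
    (hg.differentiableAt (isOpen_ball.mem_nhds (hsub hz))).continuousAt
  have hne (z) (hz : z ∈ closedBall 0 (Real.exp t)) (hz0 : z ≠ 0) : g z ≠ 0 := fun h ↦
    hz0 (hinj (hsub hz) (mem_ball_self (pos_of_mem_ball (hsub hz))) (h.trans hg0.symm))
  have hlower := Real.tendsto_exp_atBot.eventually
    (eventually_forall_mul_lt_norm_of_lt_norm hcompact hcont hne hg0 hσ (Real.exp_pos σ))
  obtain ⟨M, hM⟩ := hcompact.exists_bound_of_continuousOn
    fun z hz ↦ (hcont z hz).continuousWithinAt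
  have hupper : ∀ᶠ s in atBot, M < Real.exp (τ - s) :=
    (Real.tendsto_exp_atTop.comp (tendsto_atTop_add_const_left _ τ
      tendsto_neg_atBot_atTop)).eventually_gt_atTop M
  filter_upwards [hlower, hupper] with s hs hMs z hz
  have hz' : z ∈ closedBall 0 (Real.exp t) := mem_closedBall_zero_iff.2 hz.2.le
  exact ⟨Real.exp_add s σ ▸ hs z hz' hz.1, (hM z hz').trans_lt hMs⟩

end Univalent

section Lavrentev

variable {g₁ g₂ : ℂ → ℂ}

lemma logArea_add_logArea_le {S T U : Set ℂ} (hT : MeasurableSet T) (hT0 : 0 ∉ T)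
    (hmul : ∀ z ∈ S, ∀ w ∈ T, z * w ≠ 1) (hSU : S ⊆ U) (hTU : T⁻¹ ⊆ U) :
    logArea S + logArea T ≤ logArea U := by
  have hdisj : Disjoint S T⁻¹ := disjoint_left.2 fun z hzS hzT ↦ by
    have hz : z ≠ 0 := by
      rintro rfl
      exact hT0 (by simpa using hzT)
    exact hmul z hzS z⁻¹ hzT (mul_inv_cancel₀ hz)
  calc logArea S + logArea T = logArea (S ∪ T⁻¹) := by
        rw [measure_union hdisj hT.inv, logArea_inv hT hT0]
    _ ≤ logArea U := measure_mono (union_subset hSU hTU)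

lemma add_le_neg_two_mul_of_mul_ne_one {σ₁ σ₂ t : ℝ}
    (hg₁ : DifferentiableOn ℂ g₁ (ball 0 1)) (hg₂ : DifferentiableOn ℂ g₂ (ball 0 1))
    (hinj₁ : InjOn g₁ (ball 0 1)) (hinj₂ : InjOn g₂ (ball 0 1))
    (hg₁0 : g₁ 0 = 0) (hg₂0 : g₂ 0 = 0)
    (hmul : ∀ z ∈ ball 0 1, ∀ w ∈ ball 0 1, g₁ z * g₂ w ≠ 1)
    (hσ₁ : Real.exp σ₁ < ‖deriv g₁ 0‖) (hσ₂ : Real.exp σ₂ < ‖deriv g₂ 0‖) (ht : t < 0) :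
    σ₁ + σ₂ ≤ -2 * t := by
  have ht1 : Real.exp t < 1 := Real.exp_lt_one_iff.2 ht
  obtain ⟨s, hst, hmaps₁, hmaps₂⟩ := ((eventually_lt_atBot t).and
    ((eventually_mapsTo_expAnnulus hg₁ hinj₁ hg₁0 hσ₁ ht1 (-σ₂)).and
      (eventually_mapsTo_expAnnulus hg₂ hinj₂ hg₂0 hσ₂ ht1 (-σ₁)))).exists
  set A := expAnnulus s t
  have hA : A ⊆ ball 0 1 := (expAnnulus_subset_ball s t).trans (ball_subset_ball ht1.le)
  have hmeas : MeasurableSet (g₂ '' A) :=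
    (isOpen_expAnnulus s t).measurableSet.image_of_continuousOn_injOn
      (hg₂.continuousOn.mono hA) (hinj₂.mono hA)
  have h0 : 0 ∉ g₂ '' A := by
    rintro ⟨z, hz, hz0⟩
    exact ne_zero_of_mem_expAnnulus (hmaps₂ hz) hz0
  have hmul' : ∀ z ∈ g₁ '' A, ∀ w ∈ g₂ '' A, z * w ≠ 1 :=
    forall_mem_image.2 fun z hz ↦ forall_mem_image.2 fun w hw ↦ hmul z (hA hz) w (hA hw)
  have hinv : (g₂ '' A)⁻¹ ⊆ expAnnulus (s + σ₁) (-σ₂ - s) := by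
    have h := inv_subset_inv.2 hmaps₂.image_subset
    rw [inv_expAnnulus] at h
    convert h using 2 <;> ring
  have harea : logArea A + logArea A ≤ logArea (expAnnulus (s + σ₁) (-σ₂ - s)) := by
    have hd₁ := norm_pos_iff.1 ((Real.exp_pos σ₁).trans hσ₁)
    have hd₂ := norm_pos_iff.1 ((Real.exp_pos σ₂).trans hσ₂)
    exact (add_le_add (logArea_expAnnulus_le_logArea_image hg₁ hinj₁ hg₁0 hd₁ hst ht1)
      (logArea_expAnnulus_le_logArea_image hg₂ hinj₂ hg₂0 hd₂ hst ht1)).trans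
      (logArea_add_logArea_le hmeas h0 hmul' hmaps₁.image_subset hinv)
  have hpos : 0 < 2 * π * (t - s) := mul_pos Real.two_pi_pos (sub_pos.2 hst)
  rw [logArea_expAnnulus, logArea_expAnnulus, ← ENNReal.ofReal_add hpos.le hpos.le,
    ENNReal.ofReal_le_ofReal_iff', or_iff_left (by linarith), ← mul_add,
    mul_le_mul_iff_right₀ Real.two_pi_pos] at harea
  linarith

lemma norm_deriv_mul_norm_deriv_le_one_of_mul_ne_one
    (hg₁ : DifferentiableOn ℂ g₁ (ball 0 1)) (hg₂ : DifferentiableOn ℂ g₂ (ball 0 1))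
    (hinj₁ : InjOn g₁ (ball 0 1)) (hinj₂ : InjOn g₂ (ball 0 1))
    (hg₁0 : g₁ 0 = 0) (hg₂0 : g₂ 0 = 0)
    (hmul : ∀ z ∈ ball 0 1, ∀ w ∈ ball 0 1, g₁ z * g₂ w ≠ 1) :
    ‖deriv g₁ 0‖ * ‖deriv g₂ 0‖ ≤ 1 := by
  by_contra! hlt
  have hpos₁ : 0 < ‖deriv g₁ 0‖ := norm_pos_iff.2 fun h ↦ by norm_num [h] at hlt
  have hpos₂ : 0 < ‖deriv g₂ 0‖ := norm_pos_iff.2 fun h ↦ by norm_num [h] at hlt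
  have hlog := Real.log_pos hlt
  rw [Real.log_mul hpos₁.ne' hpos₂.ne'] at hlog
  obtain ⟨t, ht, htlog⟩ : ∃ t < 0, -4 * t < Real.log ‖deriv g₁ 0‖ + Real.log ‖deriv g₂ 0‖ :=
    ⟨-(Real.log ‖deriv g₁ 0‖ + Real.log ‖deriv g₂ 0‖) / 5, by linarith, by linarith⟩
  have hexp {x : ℝ} (hx : 0 < x) : Real.exp (Real.log x + t) < x :=
    (Real.lt_log_iff_exp_lt hx).1 (by linarith)
  linarith [add_le_neg_two_mul_of_mul_ne_one hg₁ hg₂ hinj₁ hinj₂ hg₁0 hg₂0 hmul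
    (hexp hpos₁) (hexp hpos₂) ht]

end Lavrentev

section SquareRoot

lemma isSimplyConnected_of_convex {E : Type*} [AddCommGroup E] [Module ℝ E] [TopologicalSpace E]
    [ContinuousAdd E] [ContinuousSMul ℝ E] {U : Set E} (hU : Convex ℝ U) (hne : U.Nonempty) :
    IsSimplyConnected U := by
  have := hU.contractibleSpace hne
  exact SimplyConnectedSpace.ofContractible U

lemma differentiableAt_of_differentiableAt_sq {𝕜 : Type*} [NontriviallyNormedField 𝕜]
    [NeZero (2 : 𝕜)] {h : 𝕜 → 𝕜} {x : 𝕜} (hc : ContinuousAt h x) (hx : h x ≠ 0)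
    (hd : DifferentiableAt 𝕜 (fun z ↦ h z ^ 2) x) : DifferentiableAt 𝕜 h x := by
  have hsum : ContinuousAt (fun z ↦ h z + h x) x := hc.add continuousAt_const
  have hne : h x + h x ≠ 0 := by
    rw [← two_mul]
    exact mul_ne_zero two_ne_zero hx
  have hslope := (hasDerivAt_iff_tendsto_slope.1 hd.hasDerivAt).div
    hsum.continuousWithinAt.tendsto hne
  refine (hasDerivAt_iff_tendsto_slope.2 (hslope.congr' ?_)).differentiableAt
  filter_upwards [hsum.continuousWithinAt.eventually_ne hne] with z hz
  rw [Pi.div_apply, slope_def_field, slope_def_field, sq_sub_sq, mul_div_assoc,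
    mul_div_cancel_left₀ _ hz]

lemma exists_differentiableOn_sq_eq {U : Set ℂ} {g : ℂ → ℂ} (hUc : IsSimplyConnected U)
    (hUo : IsOpen U) (hg : DifferentiableOn ℂ g U) (hg0 : ∀ z ∈ U, g z ≠ 0) :
    ∃ h : ℂ → ℂ, DifferentiableOn ℂ h U ∧ ∀ z, h z ^ 2 = g z := by
  obtain ⟨h, hc, hh⟩ := exists_continuousOn_pow_eq hUc hUo hg.continuousOn
    (by simpa using hg0) two_ne_zero
  refine ⟨h, fun z hz ↦ ?_, hh⟩
  have hU := hUo.mem_nhds hz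
  have hhz : h z ≠ 0 := (pow_ne_zero_iff two_ne_zero).1 (hh z ▸ hg0 z hz)
  refine (differentiableAt_of_differentiableAt_sq (hc.continuousAt hU) hhz ?_
    ).differentiableWithinAt
  simpa only [hh] using hg.differentiableAt hU

end SquareRoot

section Koebe

variable {F : ℂ → ℂ}

-- `F` is four times the Koebe function `w / (1 + w)²` composed with `k`. Solving the quadratic
-- equation gives `k = (1 - h) / (1 + h)` with `h² = 1 - F`.
lemma exists_koebe_lift (hF : DifferentiableOn ℂ F (ball 0 1)) (hinj : InjOn F (ball 0 1))
    (hF0 : F 0 = 0) (hF1 : ∀ z ∈ ball 0 1, F z ≠ 1) :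
    ∃ k : ℂ → ℂ, DifferentiableOn ℂ k (ball 0 1) ∧ k 0 = 0 ∧
      ∀ z ∈ ball 0 1, k z ≠ -1 ∧ F z * (1 + k z) ^ 2 = 4 * k z := by
  obtain ⟨h, hd, h0, hsq⟩ : ∃ h : ℂ → ℂ, DifferentiableOn ℂ h (ball 0 1) ∧ h 0 = 1 ∧
      ∀ z, h z ^ 2 = 1 - F z := by
    obtain ⟨h, hd, hsq⟩ := exists_differentiableOn_sq_eq
      (isSimplyConnected_of_convex (convex_ball 0 1) (nonempty_ball.2 one_pos)) isOpen_ball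
      (hF.const_sub 1) fun z hz ↦ sub_ne_zero.2 (hF1 z hz).symm
    have h0 : h 0 ^ 2 = 1 := by simp [hsq, hF0]
    rcases sq_eq_one_iff.1 h0 with h0 | h0
    · exact ⟨h, hd, h0, hsq⟩
    · exact ⟨-h, hd.neg, by simp [h0], by simpa using hsq⟩
  have hne (z) (hz : z ∈ ball 0 1) : 1 + h z ≠ 0 := fun hz1 ↦ by
    have hFz : F z = 0 := by linear_combination hsq z - (h z - 1) * hz1
    have hz0 : z = 0 := hinj hz (mem_ball_self one_pos) (hFz.trans hF0.symm)
    norm_num [hz0, h0] at hz1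
  refine ⟨fun z ↦ (1 - h z) / (1 + h z), (hd.const_sub 1).fun_div (hd.const_add 1) hne,
    by simp [h0], fun z hz ↦ ⟨fun hk ↦ ?_, ?_⟩⟩
  · rw [div_eq_iff (hne z hz)] at hk
    exact two_ne_zero (α := ℂ) (by linear_combination hk)
  · have := hne z hz
    field_simp
    linear_combination 4 * hsq z

lemma norm_deriv_le_four_of_ne_one (hF : DifferentiableOn ℂ F (ball 0 1))
    (hinj : InjOn F (ball 0 1)) (hF0 : F 0 = 0) (hF1 : ∀ z ∈ ball 0 1, F z ≠ 1) :
    ‖deriv F 0‖ ≤ 4 := by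
  obtain ⟨k, hk, hk0, hFk⟩ := exists_koebe_lift hF hinj hF0 hF1
  have hne (z) (hz : z ∈ ball 0 1) : (1 + k z) ^ 2 ≠ 0 :=
    pow_ne_zero 2 fun h ↦ (hFk z hz).1 (eq_neg_of_add_eq_zero_right h)
  have hkinj : InjOn k (ball 0 1) := fun z hz w hw hzw ↦ by
    refine hinj hz hw (mul_right_cancel₀ (hne w hw) ?_)
    rw [(hFk w hw).2, ← hzw, (hFk z hz).2]
  have hkmul (z) (hz : z ∈ ball 0 1) (w) (hw : w ∈ ball 0 1) : k z * k w ≠ 1 := fun hzw ↦ by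
    have hFzw : F z = F w := by
      refine mul_right_cancel₀ (hne w hw) ?_
      linear_combination k w ^ 2 * (hFk z hz).2 - (hFk w hw).2 +
        (4 * k w - F z * (2 * k w + k z * k w + 1)) * hzw
    obtain rfl := hinj hz hw hFzw
    have hkz : k z = 1 := (mul_self_eq_one_iff.1 hzw).resolve_right (hFk z hz).1
    refine hF1 z hz ?_
    have := (hFk z hz).2
    rw [hkz] at this
    linear_combination this / 4
  have hderiv : deriv F 0 = 4 * deriv k 0 := by
    have hmem : ball (0 : ℂ) 1 ∈ 𝓝 0 := ball_mem_nhds 0 one_pos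
    have hF' := (hF.differentiableAt hmem).hasDerivAt
    have hk' := (hk.differentiableAt hmem).hasDerivAt
    have heq : (fun z ↦ F z * (1 + k z) ^ 2) =ᶠ[𝓝 0] fun z ↦ 4 * k z :=
      eventually_of_mem hmem fun z hz ↦ (hFk z hz).2
    have := (hF'.fun_mul ((hk'.const_add 1).fun_pow 2)).unique
      ((hk'.const_mul 4).congr_of_eventuallyEq heq)
    simpa [hF0, hk0] using this
  have hsq : ‖deriv k 0‖ * ‖deriv k 0‖ ≤ 1 :=
    norm_deriv_mul_norm_deriv_le_one_of_mul_ne_one hk hk hkinj hkinj hk0 hk0 hkmul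
  rw [hderiv, norm_mul, norm_ofNat]
  nlinarith [norm_nonneg (deriv k 0)]

lemma mul_norm_deriv_le_four_mul_norm_sub_of_notMem_image {f : ℂ → ℂ} {c w : ℂ} {R : ℝ}
    (hf : DifferentiableOn ℂ f (ball c R)) (hinj : InjOn f (ball c R)) (hR : 0 < R)
    (hwf : w ∉ f '' ball c R) : R * ‖deriv f c‖ ≤ 4 * ‖w - f c‖ := by
  have hmaps : MapsTo (fun z : ℂ ↦ c + R * z) (ball 0 1) (ball c R) := fun z hz ↦ by
    have : ‖z‖ < 1 := by simpa using hz
    simpa [abs_of_pos hR] using mul_lt_of_lt_one_right hR this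
  have hwc : w - f c ≠ 0 := sub_ne_zero.2 fun h ↦ hwf ⟨c, mem_ball_self hR, h.symm⟩
  set F : ℂ → ℂ := fun z ↦ (f (c + R * z) - f c) / (w - f c)
  have hF : DifferentiableOn ℂ F (ball 0 1) :=
    ((hf.comp (by fun_prop) hmaps).sub_const _).div_const _
  have hFinj : InjOn F (ball 0 1) := fun x hx y hy hxy ↦ by
    have := hinj (hmaps hx) (hmaps hy) (sub_left_injective ((div_left_inj' hwc).1 hxy))
    simpa [hR.ne'] using this
  have hF1 (z) (hz : z ∈ ball 0 1) : F z ≠ 1 := fun h ↦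
    hwf ⟨_, hmaps hz, sub_left_injective ((div_eq_one_iff_eq hwc).1 h)⟩
  have hderiv : deriv F 0 = deriv f c * R / (w - f c) := by
    have hfc : HasDerivAt f (deriv f c) (c + R * 0) := by
      simpa using (hf.differentiableAt (ball_mem_nhds c hR)).hasDerivAt
    have haff : HasDerivAt (fun z : ℂ ↦ c + R * z) R 0 := by
      simpa using ((hasDerivAt_id (0 : ℂ)).const_mul (R : ℂ)).const_add c
    exact (((hfc.comp 0 haff).sub_const (f c)).div_const (w - f c)).deriv
  have hle := norm_deriv_le_four_of_ne_one hF hFinj (by simp [F]) hF1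
  rwa [hderiv, norm_div, div_le_iff₀ (norm_pos_iff.2 hwc), norm_mul, norm_real,
    Real.norm_of_nonneg hR.le, mul_comm] at hle

theorem koebe_quarter_general {f : ℂ → ℂ} {c : ℂ} {R : ℝ} (hf : DifferentiableOn ℂ f (ball c R))
    (hinj : InjOn f (ball c R)) :
    ball (f c) (R * ‖deriv f c‖ / 4) ⊆ f '' ball c R := by
  intro w hw
  by_contra hwf
  rw [mem_ball_iff_norm] at hw
  have hR : 0 < R := by
    refine pos_of_mul_pos_left (b := ‖deriv f c‖) ?_ (norm_nonneg _)
    linarith [norm_nonneg (w - f c)]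
  linarith [mul_norm_deriv_le_four_mul_norm_sub_of_notMem_image hf hinj hR hwf]

end Koebe

/-- Koebe one-quarter theorem: `f(𝔻)` contains the disk of radius `1/4`. -/
theorem koebe_quarter (f : ℂ → ℂ) (hf : SClass f) :
    Metric.ball (0:ℂ) (1/4) ⊆ f '' Metric.ball (0:ℂ) 1 := by
  obtain ⟨hdiff, hinj, hf0, hf'⟩ := hf
  simpa [hf0, hf'] using koebe_quarter_general hdiff hinj
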